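/- Let ψ be a positive probability density on (0,∞), and let f and g be non-negative measurable functions with α := ∫₀^∞ f(x) dx < ∞ and β := ∫₀^∞ g(x) dx < ∞. Then D(f | ψ) + D(g | ψ) ≤ D(f + g | ψ) ≤ D(f | ψ) + D(g | ψ) + L(α+β) − L(α) − L(β). -/

import Mathlib

open MeasureTheory Set
open scoped ENNReal

/-- `L x = x * log x` (with `L 0 = 0`, automatic since `Real.log 0 = 0`). -/
noncomputable def L (x : ℝ) : ℝ := x * Real.log x

/-- The relative entropy `D(f | ψ) = ∫₀^∞ L (f x / ψ x) * ψ x dx`, with values in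
`(-∞, ∞]`, realized in `EReal`.  Since `L t ≥ -e⁻¹` for `t ≥ 0`, for a probability
density `ψ` on `(0,∞)` the integrand shifted by `e⁻¹ * ψ` is nonnegative, so this
is faithfully computed by a Lebesgue integral shifted back by `e⁻¹`. -/
noncomputable def relEnt (f ψ : ℝ → ℝ) : EReal :=
  ((∫⁻ x in Ioi (0 : ℝ),
      ENNReal.ofReal (L (f x / ψ x) * ψ x + Real.exp (-1) * ψ x) : ℝ≥0∞) : EReal)
    - ((Real.exp (-1) : ℝ) : EReal)

/-!
The convexity defect `L (a + b) - L a - L b` is homogeneous of degree one. Hence, for every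
reference density `ψ`, one has exactly
`D(f + g | ψ) = D(f | ψ) + D(g | ψ) + ∫ (L (f + g) - L f - L g)`,
where the last integral does not involve `ψ`. The integrand is nonnegative because `L` is
superadditive, and by the log sum inequality it lies below its tangent plane at `(∫ f, ∫ g)`, so
the integral is at most `L (∫ f + ∫ g) - L (∫ f) - L (∫ g)`.
-/

lemma measurable_L : Measurable L := Real.continuous_mul_log.measurable

lemma neg_exp_neg_one_le_L {t : ℝ} (ht : 0 ≤ t) : -Real.exp (-1) ≤ L t := by
  rcases ht.eq_or_lt with rfl | ht
  · simpa [L] using (Real.exp_pos (-1)).le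
  · have h := Real.mul_exp_neg_le_exp_neg_one (-Real.log t)
    rw [neg_neg, Real.exp_log ht] at h
    unfold L
    linarith

lemma L_add_L_le {a b : ℝ} (ha : 0 ≤ a) (hb : 0 ≤ b) : L a + L b ≤ L (a + b) := by
  have mul_log_le {s t : ℝ} (hs : 0 ≤ s) (hst : s ≤ t) : s * Real.log s ≤ s * Real.log t := by
    rcases hs.eq_or_lt with rfl | hs
    · simp
    · gcongr
  calc
    L a + L b ≤ a * Real.log (a + b) + b * Real.log (a + b) :=
      add_le_add (mul_log_le ha (by linarith)) (mul_log_le hb (by linarith))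
    _ = L (a + b) := by rw [L]; ring

lemma L_div_mul {a p : ℝ} (h : p = 0 → a = 0) : L (a / p) * p = L a - a * Real.log p := by
  by_cases ha : a = 0
  · simp [ha, L]
  · have hp : p ≠ 0 := mt h ha
    rw [L, L, Real.log_div ha hp]
    field_simp

lemma log_sum_inequality {a b p q : ℝ} (ha : 0 ≤ a) (hb : 0 ≤ b) (hp : 0 ≤ p) (hq : 0 ≤ q)
    (hpa : p = 0 → a = 0) (hqb : q = 0 → b = 0) :
    L ((a + b) / (p + q)) * (p + q) ≤ L (a / p) * p + L (b / q) * q := by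
  rcases hp.eq_or_lt with rfl | hp
  · simp [hpa rfl]
  rcases hq.eq_or_lt with rfl | hq
  · simp [hqb rfl]
  have barycenter : p / (p + q) * (a / p) + q / (p + q) * (b / q) = (a + b) / (p + q) := by
    field_simp
  have jensen : L (p / (p + q) * (a / p) + q / (p + q) * (b / q)) ≤
      p / (p + q) * L (a / p) + q / (p + q) * L (b / q) :=
    Real.convexOn_mul_log.2 (div_nonneg ha hp.le) (div_nonneg hb hq.le) (by positivity)
      (by positivity) (by field_simp)
  rw [barycenter] at jensen
  calc
    L ((a + b) / (p + q)) * (p + q)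
      ≤ (p / (p + q) * L (a / p) + q / (p + q) * L (b / q)) * (p + q) := by
        gcongr
    _ = L (a / p) * p + L (b / q) * q := by field_simp

/-- The convexity defect of `L`: the entropy gained by merging the masses `a` and `b`, that is
`a + b` times the binary entropy of `a / (a + b)`. -/
noncomputable def mixingEntropy (a b : ℝ) : ℝ := L (a + b) - L a - L b

lemma mixingEntropy_nonneg {a b : ℝ} (ha : 0 ≤ a) (hb : 0 ≤ b) : 0 ≤ mixingEntropy a b := by
  have := L_add_L_le ha hb
  unfold mixingEntropy
  linarith

lemma mixingEntropy_eq (a b : ℝ) :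
    mixingEntropy a b =
      (Real.log (a + b) - Real.log a) * a + (Real.log (a + b) - Real.log b) * b := by
  unfold mixingEntropy L
  ring

lemma mixingEntropy_le_tangent {a b p q : ℝ} (ha : 0 ≤ a) (hb : 0 ≤ b) (hp : 0 ≤ p) (hq : 0 ≤ q)
    (hpa : p = 0 → a = 0) (hqb : q = 0 → b = 0) :
    mixingEntropy a b ≤
      (Real.log (p + q) - Real.log p) * a + (Real.log (p + q) - Real.log q) * b := by
  have hab : p + q = 0 → a + b = 0 := fun h => by
    rw [hpa (by linarith), hqb (by linarith), add_zero]
  have log_sum := log_sum_inequality ha hb hp hq hpa hqb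
  rw [L_div_mul hab, L_div_mul hpa, L_div_mul hqb] at log_sum
  unfold mixingEntropy
  linarith

/-- The integrand of the relative entropy at a point where the two densities are `a` and `p`, raised
by `p / e` so as to be nonnegative. -/
noncomputable def shiftedEntropyDensity (a p : ℝ) : ℝ := L (a / p) * p + Real.exp (-1) * p

lemma shiftedEntropyDensity_nonneg {a p : ℝ} (ha : 0 ≤ a) (hp : 0 ≤ p) :
    0 ≤ shiftedEntropyDensity a p := by
  have h := neg_exp_neg_one_le_L (div_nonneg ha hp)
  rw [shiftedEntropyDensity, ← add_mul]
  exact mul_nonneg (by linarith) hp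

lemma shiftedEntropyDensity_add {a b p : ℝ} (hp : p ≠ 0) :
    shiftedEntropyDensity (a + b) p + Real.exp (-1) * p =
      shiftedEntropyDensity a p + (shiftedEntropyDensity b p + mixingEntropy a b) := by
  have L_div_mul_p (c : ℝ) : L (c / p) * p = L c - c * Real.log p :=
    L_div_mul fun h => absurd h hp
  simp only [shiftedEntropyDensity, mixingEntropy, L_div_mul_p]
  ring

section Integration

variable {X : Type*} [MeasurableSpace X] {μ : Measure X} {f g ψ : X → ℝ}

/-- The relative entropy `∫ L (f / ψ) ψ dμ ∈ (-∞, ∞]` of densities with respect to an arbitrary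
measure `μ`, for `ψ` positive of finite mass; as in `relEnt`, the integrand is raised by `ψ / e` and
the integral lowered by the same total amount. -/
noncomputable def relEntropy (μ : Measure X) (f ψ : X → ℝ) : EReal :=
  ((∫⁻ x, ENNReal.ofReal (shiftedEntropyDensity (f x) (ψ x)) ∂μ : ℝ≥0∞) : EReal)
    - ((Real.exp (-1) * ∫ x, ψ x ∂μ : ℝ) : EReal)

lemma relEnt_eq_relEntropy {f ψ : ℝ → ℝ} (hψ : ∫ x in Ioi (0 : ℝ), ψ x = 1) :
    relEnt f ψ = relEntropy (volume.restrict (Ioi 0)) f ψ := by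
  simp only [relEnt, relEntropy, shiftedEntropyDensity, hψ, mul_one]

lemma aemeasurable_shiftedEntropyDensity (hf : AEMeasurable f μ) (hψ : AEMeasurable ψ μ) :
    AEMeasurable (fun x => shiftedEntropyDensity (f x) (ψ x)) μ :=
  ((measurable_L.comp_aemeasurable (hf.div hψ)).mul hψ).add (hψ.const_mul _)

lemma lintegral_shiftedEntropyDensity_add (hψ0 : ∀ᵐ x ∂μ, 0 < ψ x) (hψ : Integrable ψ μ)
    (hf0 : 0 ≤ᵐ[μ] f) (hf : AEMeasurable f μ) (hg0 : 0 ≤ᵐ[μ] g) (hg : AEMeasurable g μ) :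
    ∫⁻ x, ENNReal.ofReal (shiftedEntropyDensity (f x + g x) (ψ x)) ∂μ
        + ENNReal.ofReal (Real.exp (-1) * ∫ x, ψ x ∂μ) =
      ∫⁻ x, ENNReal.ofReal (shiftedEntropyDensity (f x) (ψ x)) ∂μ
        + (∫⁻ x, ENNReal.ofReal (shiftedEntropyDensity (g x) (ψ x)) ∂μ
          + ∫⁻ x, ENNReal.ofReal (mixingEntropy (f x) (g x)) ∂μ) := by
  have shift_nonneg : ∀ᵐ x ∂μ, 0 ≤ Real.exp (-1) * ψ x :=
    hψ0.mono fun x hx => by positivity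
  rw [← integral_const_mul,
    ofReal_integral_eq_lintegral_ofReal (hψ.const_mul _) shift_nonneg,
    ← lintegral_add_right' _ (hψ.aemeasurable.const_mul _).ennreal_ofReal,
    ← lintegral_add_left' (aemeasurable_shiftedEntropyDensity hg hψ.aemeasurable).ennreal_ofReal,
    ← lintegral_add_left' (aemeasurable_shiftedEntropyDensity hf hψ.aemeasurable).ennreal_ofReal]
  refine lintegral_congr_ae ?_
  filter_upwards [hψ0, hf0, hg0, shift_nonneg] with x hψx hfx hgx hsx
  have hF := shiftedEntropyDensity_nonneg hfx hψx.le
  have hG := shiftedEntropyDensity_nonneg hgx hψx.le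
  have hFG := shiftedEntropyDensity_nonneg (add_nonneg hfx hgx) hψx.le
  have hM := mixingEntropy_nonneg hfx hgx
  rw [← ENNReal.ofReal_add hFG hsx, ← ENNReal.ofReal_add hG hM,
    ← ENNReal.ofReal_add hF (add_nonneg hG hM), shiftedEntropyDensity_add hψx.ne']

theorem relEntropy_add (hψ0 : ∀ᵐ x ∂μ, 0 < ψ x) (hψ : Integrable ψ μ)
    (hf0 : 0 ≤ᵐ[μ] f) (hf : AEMeasurable f μ) (hg0 : 0 ≤ᵐ[μ] g) (hg : AEMeasurable g μ) :
    relEntropy μ (fun x => f x + g x) ψ = relEntropy μ f ψ + relEntropy μ g ψ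
      + ((∫⁻ x, ENNReal.ofReal (mixingEntropy (f x) (g x)) ∂μ : ℝ≥0∞) : EReal) := by
  have shift_nonneg : 0 ≤ Real.exp (-1) * ∫ x, ψ x ∂μ :=
    mul_nonneg (Real.exp_pos _).le (integral_nonneg_of_ae (hψ0.mono fun _ h => h.le))
  have h := congrArg ((↑) : ℝ≥0∞ → EReal)
    (lintegral_shiftedEntropyDensity_add hψ0 hψ hf0 hf hg0 hg)
  simp only [EReal.coe_ennreal_add, EReal.coe_ennreal_ofReal, max_eq_left shift_nonneg] at h
  rw [relEntropy, ← EReal.add_sub_cancel_right (a := ((∫⁻ _, _ ∂μ : ℝ≥0∞) : EReal)), h]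
  simp only [relEntropy, sub_eq_add_neg]
  ac_rfl

lemma lintegral_mixingEntropy_le (hf0 : 0 ≤ᵐ[μ] f) (hf : Integrable f μ)
    (hg0 : 0 ≤ᵐ[μ] g) (hg : Integrable g μ) :
    ∫⁻ x, ENNReal.ofReal (mixingEntropy (f x) (g x)) ∂μ ≤
      ENNReal.ofReal (mixingEntropy (∫ x, f x ∂μ) (∫ x, g x ∂μ)) := by
  set α := ∫ x, f x ∂μ
  set β := ∫ x, g x ∂μ
  have f_eq_zero (h : α = 0) : f =ᵐ[μ] 0 := (integral_eq_zero_iff_of_nonneg_ae hf0 hf).1 h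
  have g_eq_zero (h : β = 0) : g =ᵐ[μ] 0 := (integral_eq_zero_iff_of_nonneg_ae hg0 hg).1 h
  have tangent : ∀ᵐ x ∂μ, mixingEntropy (f x) (g x) ≤
      (Real.log (α + β) - Real.log α) * f x + (Real.log (α + β) - Real.log β) * g x := by
    filter_upwards [hf0, hg0, Filter.eventually_imp_distrib_left.2 f_eq_zero,
      Filter.eventually_imp_distrib_left.2 g_eq_zero] with x hfx hgx hαx hβx
    exact mixingEntropy_le_tangent hfx hgx (integral_nonneg_of_ae hf0) (integral_nonneg_of_ae hg0)
      hαx hβx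
  have tangent_nonneg : ∀ᵐ x ∂μ, 0 ≤
      (Real.log (α + β) - Real.log α) * f x + (Real.log (α + β) - Real.log β) * g x := by
    filter_upwards [hf0, hg0, tangent] with x hfx hgx hx
    exact (mixingEntropy_nonneg hfx hgx).trans hx
  have f_term := hf.const_mul (Real.log (α + β) - Real.log α)
  have g_term := hg.const_mul (Real.log (α + β) - Real.log β)
  have tangent_integrable : Integrable (fun x =>
      (Real.log (α + β) - Real.log α) * f x + (Real.log (α + β) - Real.log β) * g x) μ :=
    f_term.add g_term
  calc
    _ ≤ ∫⁻ x, ENNReal.ofReal ((Real.log (α + β) - Real.log α) * f x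
          + (Real.log (α + β) - Real.log β) * g x) ∂μ :=
      lintegral_mono_ae (tangent.mono fun _ hx => ENNReal.ofReal_le_ofReal hx)
    _ = ENNReal.ofReal (mixingEntropy α β) := by
      rw [← ofReal_integral_eq_lintegral_ofReal tangent_integrable tangent_nonneg,
        integral_add f_term g_term, integral_const_mul, integral_const_mul, mixingEntropy_eq]

theorem stmt6_general (hψ0 : ∀ᵐ x ∂μ, 0 < ψ x) (hψ : Integrable ψ μ)
    (hf0 : 0 ≤ᵐ[μ] f) (hf : Integrable f μ) (hg0 : 0 ≤ᵐ[μ] g) (hg : Integrable g μ) :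
    relEntropy μ f ψ + relEntropy μ g ψ ≤ relEntropy μ (fun x => f x + g x) ψ ∧
      relEntropy μ (fun x => f x + g x) ψ ≤ relEntropy μ f ψ + relEntropy μ g ψ
        + ((L (∫ x, f x ∂μ + ∫ x, g x ∂μ) - L (∫ x, f x ∂μ) - L (∫ x, g x ∂μ) : ℝ) : EReal) := by
  rw [relEntropy_add hψ0 hψ hf0 hf.aemeasurable hg0 hg.aemeasurable]
  refine ⟨le_add_of_nonneg_right (EReal.coe_ennreal_nonneg _), ?_⟩
  gcongr
  have mixing_nonneg := mixingEntropy_nonneg (integral_nonneg_of_ae hf0) (integral_nonneg_of_ae hg0)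
  have h := EReal.coe_ennreal_le_coe_ennreal_iff.2 (lintegral_mixingEntropy_le hf0 hf hg0 hg)
  rwa [EReal.coe_ennreal_ofReal, max_eq_left mixing_nonneg] at h

end Integration

theorem stmt6 (ψ : ℝ → ℝ) (hψmeas : Measurable ψ)
    (hψpos : ∀ x ∈ Ioi (0 : ℝ), 0 < ψ x)
    (hψint : IntegrableOn ψ (Ioi (0 : ℝ)))
    (hψprob : ∫ x in Ioi (0 : ℝ), ψ x = 1)
    (f g : ℝ → ℝ)
    (hfmeas : Measurable f) (hf0 : ∀ x, 0 ≤ f x)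
    (hfint : IntegrableOn f (Ioi (0 : ℝ)))
    (hgmeas : Measurable g) (hg0 : ∀ x, 0 ≤ g x)
    (hgint : IntegrableOn g (Ioi (0 : ℝ)))
    (α β : ℝ)
    (hαdef : α = ∫ x in Ioi (0 : ℝ), f x)
    (hβdef : β = ∫ x in Ioi (0 : ℝ), g x) :
    relEnt f ψ + relEnt g ψ ≤ relEnt (fun x => f x + g x) ψ ∧
      relEnt (fun x => f x + g x) ψ
        ≤ relEnt f ψ + relEnt g ψ + ((L (α + β) - L α - L β : ℝ) : EReal) := by
  subst hαdef hβdef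
  simp only [relEnt_eq_relEntropy hψprob]
  exact stmt6_general (ae_restrict_of_forall_mem measurableSet_Ioi hψpos) hψint
    (.of_forall hf0) hfint (.of_forall hg0) hgint
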